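/- arXiv:2011.08890 — 2 statements merged into one kernel-verified Lean document; each statement's English description precedes it below -/
import Mathlib

section
/- For every smooth function ψ : ℝ³ → ℂ⁴ and every x ∈ ℝ³, ((Σ·L)((Σ·L)ψ))(x) = (L²ψ)(x) − ((Σ·L)ψ)(x). -/
noncomputable section

open Matrix

/-- Physical space ℝ³. -/
abbrev E3 := EuclideanSpace ℝ (Fin 3)

/-- The Pauli matrices σ₁, σ₂, σ₃ (indexed by `Fin 3`, with `pauli 0 = σ₁`, etc.). -/
def pauli : Fin 3 → Matrix (Fin 2) (Fin 2) ℂ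
  | 0 => !![0, 1; 1, 0]
  | 1 => !![0, -Complex.I; Complex.I, 0]
  | 2 => !![1, 0; 0, -1]

/-- The 4×4 block matrix `[[A, B], [C, D]]` built from 2×2 blocks. -/
def qblock (A B C D : Matrix (Fin 2) (Fin 2) ℂ) : Matrix (Fin 4) (Fin 4) ℂ :=
  Matrix.reindex finSumFinEquiv finSumFinEquiv (Matrix.fromBlocks A B C D)

/-- The Dirac matrix `β = γ⁰ = [[I₂,0],[0,−I₂]]`. -/
def betaM : Matrix (Fin 4) (Fin 4) ℂ := qblock 1 0 0 (-1)

/-- The spin matrices `Σⱼ = [[σⱼ,0],[0,σⱼ]]` for j = 1,2,3. -/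
def SigM (j : Fin 3) : Matrix (Fin 4) (Fin 4) ℂ := qblock (pauli j) 0 0 (pauli j)

/-- The partial derivative `∂ⱼψ` of a ℂ⁴-valued function on ℝ³. -/
def pd (j : Fin 3) (ψ : E3 → Fin 4 → ℂ) : E3 → Fin 4 → ℂ :=
  fun x => fderiv ℝ ψ x (EuclideanSpace.single j 1)

/-- The orbital angular momentum operator `Lⱼψ = −i (x × ∇ψ)ⱼ` (cyclic indices in `Fin 3`). -/
def Lop (j : Fin 3) (ψ : E3 → Fin 4 → ℂ) : E3 → Fin 4 → ℂ :=
  fun x => (-Complex.I) • (x (j + 1) • pd (j + 2) ψ x - x (j + 2) • pd (j + 1) ψ x)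

/-- The operator `L²ψ = Σⱼ Lⱼ(Lⱼψ)`. -/
def L2op (ψ : E3 → Fin 4 → ℂ) : E3 → Fin 4 → ℂ :=
  fun x => ∑ j, Lop j (Lop j ψ) x

/-- The operator `(Σ·L)ψ = Σⱼ Σⱼ(Lⱼψ)`. -/
def SigL (ψ : E3 → Fin 4 → ℂ) : E3 → Fin 4 → ℂ :=
  fun x => ∑ j, (SigM j).mulVec (Lop j ψ x)

/-- Dirac's operator `Kψ = β(ψ + (Σ·L)ψ)`. -/
def Kop (ψ : E3 → Fin 4 → ℂ) : E3 → Fin 4 → ℂ :=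
  fun x => betaM.mulVec (ψ x + SigL ψ x)


theorem qblock_diagonal_mul (A B C D : Matrix (Fin 2) (Fin 2) ℂ) :
    qblock A 0 0 B * qblock C 0 0 D = qblock (A * C) 0 0 (B * D) := by
  simp [qblock, Matrix.submatrix_mul_equiv, Matrix.fromBlocks_multiply]

theorem qblock_diagonal_smul (c : ℂ) (A B : Matrix (Fin 2) (Fin 2) ℂ) :
    qblock (c • A) 0 0 (c • B) = c • qblock A 0 0 B := by
  have h : fromBlocks (c • A) 0 0 (c • B) = c • fromBlocks A 0 0 B := by
    simp [Matrix.fromBlocks_smul]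
  rw [qblock, h]
  rfl

theorem SigM_mul_self (j : Fin 3) : SigM j * SigM j = 1 := by
  have h : pauli j * pauli j = 1 := by
    fin_cases j <;> ext a b <;> fin_cases a <;> fin_cases b <;>
      simp [pauli, Matrix.mul_apply, Fin.sum_univ_two]
  rw [SigM, qblock_diagonal_mul, h]
  simp [qblock]

theorem SigM_mul_succ (j : Fin 3) : SigM j * SigM (j + 1) = Complex.I • SigM (j + 2) := by
  have h : pauli j * pauli (j + 1) = Complex.I • pauli (j + 2) := by
    fin_cases j <;> ext a b <;> fin_cases a <;> fin_cases b <;>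
      simp [pauli, Matrix.mul_apply, Fin.sum_univ_two]
  rw [SigM, SigM, SigM, qblock_diagonal_mul, h, qblock_diagonal_smul]

theorem SigM_succ_mul (j : Fin 3) : SigM (j + 1) * SigM j = -Complex.I • SigM (j + 2) := by
  have h : pauli (j + 1) * pauli j = -Complex.I • pauli (j + 2) := by
    fin_cases j <;> ext a b <;> fin_cases a <;> fin_cases b <;>
      simp [pauli, Matrix.mul_apply, Fin.sum_univ_two]
  rw [SigM, SigM, SigM, qblock_diagonal_mul, h, qblock_diagonal_smul]

theorem contDiff_pd (j : Fin 3) {ψ : E3 → Fin 4 → ℂ} (hψ : ContDiff ℝ (⊤ : ℕ∞) ψ) :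
    ContDiff ℝ (⊤ : ℕ∞) (pd j ψ) :=
  (hψ.fderiv_right (m := (⊤ : ℕ∞)) (by simp)).clm_apply contDiff_const

theorem contDiff_Lop (j : Fin 3) {ψ : E3 → Fin 4 → ℂ} (hψ : ContDiff ℝ (⊤ : ℕ∞) ψ) :
    ContDiff ℝ (⊤ : ℕ∞) (Lop j ψ) := by
  have h1 := contDiff_pd (j + 1) hψ
  have h2 := contDiff_pd (j + 2) hψ
  unfold Lop
  fun_prop

theorem pd_sum_mulVec (j : Fin 3) (M : Fin 3 → Matrix (Fin 4) (Fin 4) ℂ)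
    {f : Fin 3 → E3 → Fin 4 → ℂ} (hf : ∀ k, Differentiable ℝ (f k)) (x : E3) :
    pd j (fun y => ∑ k, (M k).mulVec (f k y)) x = ∑ k, (M k).mulVec (pd j (f k) x) := by
  let A : Fin 3 → (Fin 4 → ℂ) →L[ℝ] (Fin 4 → ℂ) := fun k =>
    LinearMap.toContinuousLinearMap ((Matrix.mulVecLin (M k)).restrictScalars ℝ)
  have h : HasFDerivAt (fun y => ∑ k, A k (f k y)) (∑ k, (A k).comp (fderiv ℝ (f k) x)) x :=
    HasFDerivAt.fun_sum fun k _ => (A k).hasFDerivAt.comp x (hf k x).hasFDerivAt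
  have h' : fderiv ℝ (fun y => ∑ k, (M k).mulVec (f k y)) x
      = ∑ k, (A k).comp (fderiv ℝ (f k) x) := h.fderiv
  simp [pd, h', A]

theorem Lop_sum_mulVec (j : Fin 3) (M : Fin 3 → Matrix (Fin 4) (Fin 4) ℂ)
    {f : Fin 3 → E3 → Fin 4 → ℂ} (hf : ∀ k, Differentiable ℝ (f k)) (x : E3) :
    Lop j (fun y => ∑ k, (M k).mulVec (f k y)) x = ∑ k, (M k).mulVec (Lop j (f k) x) := by
  simp only [Lop, pd_sum_mulVec _ M hf, Matrix.mulVec_smul, Matrix.mulVec_sub, Finset.smul_sum,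
    Finset.sum_sub_distrib, smul_sub]

theorem pd_comm (j k : Fin 3) {ψ : E3 → Fin 4 → ℂ} (hψ : ContDiff ℝ (⊤ : ℕ∞) ψ) (x : E3) :
    pd j (pd k ψ) x = pd k (pd j ψ) x := by
  have hd : DifferentiableAt ℝ (fderiv ℝ ψ) x :=
    (hψ.fderiv_right (m := (⊤ : ℕ∞)) (by simp)).differentiable (by simp) x
  have key (a b : Fin 3) : pd a (pd b ψ) x =
      fderiv ℝ (fderiv ℝ ψ) x (EuclideanSpace.single a 1) (EuclideanSpace.single b 1) := by
    unfold pd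
    rw [fderiv_clm_apply hd (differentiableAt_const _)]
    simp
  rw [key, key]
  have h2 : minSmoothness ℝ 2 ≤ ((⊤ : ℕ∞) : WithTop ℕ∞) := by
    rw [minSmoothness_of_isRCLikeNormedField]
    exact WithTop.coe_le_coe.2 (le_top (a := (2 : ℕ∞)))
  exact (hψ.contDiffAt.isSymmSndFDerivAt h2) _ _

theorem pd_Lop (k j : Fin 3) {ψ : E3 → Fin 4 → ℂ} (hψ : ContDiff ℝ (⊤ : ℕ∞) ψ) (x : E3) :
    pd k (Lop j ψ) x = -Complex.I •
      ((x (j + 1) • pd k (pd (j + 2) ψ) x + (if j + 1 = k then (1 : ℝ) else 0) • pd (j + 2) ψ x)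
      - (x (j + 2) • pd k (pd (j + 1) ψ) x
        + (if j + 2 = k then (1 : ℝ) else 0) • pd (j + 1) ψ x)) := by
  have hc (i : Fin 3) : HasFDerivAt (fun y : E3 => y i)
      (EuclideanSpace.proj i : E3 →L[ℝ] ℝ) x :=
    (EuclideanSpace.proj i : E3 →L[ℝ] ℝ).hasFDerivAt
  have hp (i : Fin 3) := ((contDiff_pd i hψ).differentiable (by simp) x).hasFDerivAt
  have h := (((hc (j + 1)).smul (hp (j + 2))).sub
    ((hc (j + 2)).smul (hp (j + 1)))).const_smul (-Complex.I)
  have h' : fderiv ℝ (Lop j ψ) x = _ := h.fderiv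
  rw [pd, h']
  simp [pd]

theorem Lop_commutator (j : Fin 3) {ψ : E3 → Fin 4 → ℂ} (hψ : ContDiff ℝ (⊤ : ℕ∞) ψ) (x : E3) :
    Lop j (Lop (j + 1) ψ) x - Lop (j + 1) (Lop j ψ) x = Complex.I • Lop (j + 2) ψ x := by
  have h01 := pd_comm 0 1 hψ x
  have h02 := pd_comm 0 2 hψ x
  have h12 := pd_comm 1 2 hψ x
  rw [Lop, Lop, Lop, pd_Lop _ _ hψ, pd_Lop _ _ hψ, pd_Lop _ _ hψ, pd_Lop _ _ hψ]
  ext a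
  fin_cases j <;> simp [h01, h02, h12] <;> ring

/-- For smooth `ψ : ℝ³ → ℂ⁴`: `(Σ·L)((Σ·L)ψ) = L²ψ − (Σ·L)ψ`. -/
theorem SigL_SigL (ψ : E3 → Fin 4 → ℂ) (hψ : ContDiff ℝ (⊤ : ℕ∞) ψ) (x : E3) :
    SigL (SigL ψ) x = L2op ψ x - SigL ψ x := by
  have hL (j : Fin 3) : Lop j (SigL ψ) x = ∑ k, (SigM k).mulVec (Lop j (Lop k ψ) x) :=
    Lop_sum_mulVec j SigM (fun k => (contDiff_Lop k hψ).differentiable (by simp)) x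
  have hc (j : Fin 3) := eq_add_of_sub_eq (Lop_commutator j hψ x)
  have s01 := SigM_mul_succ 0
  have s12 := SigM_mul_succ 1
  have s20 := SigM_mul_succ 2
  have s10 := SigM_succ_mul 0
  have s21 := SigM_succ_mul 1
  have s02 := SigM_succ_mul 2
  have c01 := hc 0
  have c12 := hc 1
  have c20 := hc 2
  simp only [Fin.isValue, Fin.reduceAdd, zero_add] at s01 s12 s20 s10 s21 s02 c01 c12 c20
  rw [SigL, SigL, L2op]
  simp only [hL, Fin.sum_univ_three, Matrix.mulVec_add, Matrix.mulVec_mulVec, SigM_mul_self,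
    s01, s12, s20, s10, s21, s02, c01, c12, c20, Matrix.one_mulVec, Matrix.smul_mulVec,
    Matrix.mulVec_smul, Matrix.neg_mulVec, smul_smul, neg_smul, Complex.I_mul_I, one_smul]
  module

end
end

section
/- For every smooth function ψ : ℝ³∖{0} → ℂ⁴ and every x ∈ ℝ³∖{0}, ((α·(−i∇))ψ)(x) = −i α_r(x)( (∂_rψ)(x) + ψ(x)/|x| − (1/|x|)(β(Kψ))(x) ), where (α·(−i∇))ψ = Σ_j α_j(−i∂_jψ). -/
noncomputable section

open Matrix

/-- The Dirac matrices `αⱼ = [[0,σⱼ],[σⱼ,0]]` for j = 1,2,3. -/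
def alphaM (j : Fin 3) : Matrix (Fin 4) (Fin 4) ℂ := qblock 0 (pauli j) (pauli j) 0

/-- The radial Dirac matrix `α_r(x) = Σⱼ (xⱼ/|x|) αⱼ`. -/
def alphaR (x : E3) : Matrix (Fin 4) (Fin 4) ℂ :=
  ∑ j, ((x j / ‖x‖ : ℝ) : ℂ) • alphaM j

/-- The radial derivative `∂_rψ(x) = (x/|x|)·∇ψ(x)`. -/
def radialD (ψ : E3 → Fin 4 → ℂ) : E3 → Fin 4 → ℂ :=
  fun x => ∑ j, (x j / ‖x‖) • pd j ψ x

theorem qblock_eq (A B C D : Matrix (Fin 2) (Fin 2) ℂ) :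
    qblock A B C D = !![A 0 0, A 0 1, B 0 0, B 0 1; A 1 0, A 1 1, B 1 0, B 1 1;
      C 0 0, C 0 1, D 0 0, D 0 1; C 1 0, C 1 1, D 1 0, D 1 1] := by
  ext i j
  fin_cases i <;> fin_cases j <;> rfl

theorem betaM_mul_self : betaM * betaM = 1 := by
  ext i j
  fin_cases i <;> fin_cases j <;> simp [betaM, qblock_eq, Matrix.mul_apply, Fin.sum_univ_four]

theorem betaM_mulVec_Kop (ψ : E3 → Fin 4 → ℂ) (x : E3) :
    betaM.mulVec (Kop ψ x) = ψ x + SigL ψ x := by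
  rw [Kop, Matrix.mulVec_mulVec, betaM_mul_self, Matrix.one_mulVec]

/-- `|x|⁻² (x₁² + x₂² + x₃²) = 1` in `ℂ`, for `x ≠ 0`. -/
theorem inv_norm_sq_mul_sum_sq {x : E3} (hx : x ≠ 0) :
    ((‖x‖ : ℂ)⁻¹) ^ 2 * ((x 0 : ℂ) ^ 2 + (x 1 : ℂ) ^ 2 + (x 2 : ℂ) ^ 2) = 1 := by
  have hsum : ‖x‖ ^ 2 = x 0 ^ 2 + x 1 ^ 2 + x 2 ^ 2 := by
    simp [EuclideanSpace.real_norm_sq_eq, Fin.sum_univ_three]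
  have hsumC : (‖x‖ : ℂ) ^ 2 = (x 0 : ℂ) ^ 2 + (x 1 : ℂ) ^ 2 + (x 2 : ℂ) ^ 2 := by
    exact_mod_cast hsum
  have hnorm : (‖x‖ : ℂ) ≠ 0 := by simpa using hx
  rw [← hsumC, ← mul_pow, inv_mul_cancel₀ hnorm, one_pow]

/-- `α·∇ψ = α_r (∂_rψ − (Σ·L)ψ / |x|)`. -/
theorem sum_alphaM_mulVec_pd (ψ : E3 → Fin 4 → ℂ) {x : E3} (hx : x ≠ 0) :
    ∑ j, (alphaM j).mulVec (pd j ψ x)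
      = (alphaR x).mulVec (radialD ψ x - ‖x‖⁻¹ • SigL ψ x) := by
  have hx' := inv_norm_sq_mul_sum_sq hx
  have hI := Complex.I_sq
  simp only [alphaR, radialD, SigL, Lop, Fin.sum_univ_three, Fin.isValue, Fin.reduceAdd,
    zero_add, alphaM, SigM, qblock_eq, pauli]
  generalize pd 0 ψ x = a, pd 1 ψ x = b, pd 2 ψ x = c
  ext i
  fin_cases i <;>
    simp [Matrix.mulVec, dotProduct, Fin.sum_univ_four, div_eq_mul_inv] <;>
    grind

/-- For `ψ : ℝ³∖{0} → ℂ⁴` smooth and `x ≠ 0`: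
`(α·(−i∇))ψ(x) = −i α_r(x)( ∂_rψ(x) + ψ(x)/|x| − (1/|x|) β(Kψ)(x) )`. -/
theorem alpha_dot_grad_polar (ψ : E3 → Fin 4 → ℂ)
    (hψ : ContDiffOn ℝ (⊤ : ℕ∞) ψ {x : E3 | x ≠ 0}) (x : E3) (hx : x ≠ 0) :
    (∑ j, (alphaM j).mulVec ((-Complex.I) • pd j ψ x))
      = (-Complex.I) • (alphaR x).mulVec
          (radialD ψ x + ‖x‖⁻¹ • ψ x - ‖x‖⁻¹ • betaM.mulVec (Kop ψ x)) := by
  have hgrad := sum_alphaM_mulVec_pd ψ hx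
  have harg : radialD ψ x + ‖x‖⁻¹ • ψ x - ‖x‖⁻¹ • betaM.mulVec (Kop ψ x)
      = radialD ψ x - ‖x‖⁻¹ • SigL ψ x := by
    rw [betaM_mulVec_Kop, smul_add]
    abel
  simp_rw [Matrix.mulVec_smul]
  rw [← Finset.smul_sum, hgrad, harg]

end
end
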